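/- Information causality inequality without input independence: let X1, X2 and A be finite random variables such that A is independent of the pair (X1, X2), let Z = f(X1, X2, A) for a deterministic function f, and let Y1 = g1(Z, A) and Y2 = g2(Z, A) for deterministic functions g1, g2. Then I(X1 : Y1) + I(X2 : Y2) ≤ H(Z) + I(X1 : X2), where I denotes mutual information and H the Shannon entropy. -/

import Mathlib

open MeasureTheory ProbabilityTheory

/-- Shannon entropy of a finite-valued random variable `X` under the measure `μ`. -/
noncomputable def entH {Ω E : Type*} [MeasurableSpace Ω] [Fintype E]
    (μ : Measure Ω) (X : Ω → E) : ℝ :=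
  ∑ e : E, Real.negMulLog (μ (X ⁻¹' {e})).toReal

/-- Mutual information `I(X : Y)`. -/
noncomputable def mutInf {Ω E F : Type*} [MeasurableSpace Ω] [Fintype E] [Fintype F]
    (μ : Measure Ω) (X : Ω → E) (Y : Ω → F) : ℝ :=
  entH μ X + entH μ Y - entH μ (fun ω => (X ω, Y ω))

/-- Conditional Shannon entropy `H(X | Y)`. -/
noncomputable def condEnt {Ω E F : Type*} [MeasurableSpace Ω] [Fintype E] [Fintype F]
    (μ : Measure Ω) (X : Ω → E) (Y : Ω → F) : ℝ :=
  entH μ (fun ω => (X ω, Y ω)) - entH μ Y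

/-- Conditional mutual information `I(X : Y | Z)`. -/
noncomputable def condMutInf {Ω E F G : Type*} [MeasurableSpace Ω]
    [Fintype E] [Fintype F] [Fintype G]
    (μ : Measure Ω) (X : Ω → E) (Y : Ω → F) (Z : Ω → G) : ℝ :=
  entH μ (fun ω => (X ω, Z ω)) + entH μ (fun ω => (Y ω, Z ω))
    - entH μ (fun ω => (X ω, Y ω, Z ω)) - entH μ Z

/-!
Write `W = (Z, A)`. Data processing replaces each `Yᵢ` by `W`. Conditional on `W`, the mutual
information of `X1` and `X2` is nonnegative, which bounds `I(X1 : W) + I(X2 : W)` by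
`I((X1, X2) : W) + I(X1 : X2)`. Finally, adjoining `Z` to `A` raises the information about
`(X1, X2)` by at most `H(Z)`, and `A` alone carries none by independence.
-/

section Mass

variable {Ω E F : Type*} [MeasurableSpace Ω]

/-- The probability mass function `e ↦ P(X = e)` of a random variable, as a real number; `μ` need
not have total mass one. -/
noncomputable def mass (μ : Measure Ω) (X : Ω → E) (e : E) : ℝ :=
  μ.real (X ⁻¹' {e})

lemma mass_nonneg (μ : Measure Ω) (X : Ω → E) (e : E) : 0 ≤ mass μ X e :=
  measureReal_nonneg

lemma mass_le_mass_comp (μ : Measure Ω) [IsFiniteMeasure μ] (X : Ω → E) (φ : E → F) (e : E) :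
    mass μ X e ≤ mass μ (fun ω => φ (X ω)) (φ e) :=
  measureReal_mono fun _ hω => congrArg φ hω

lemma mass_comp_of_injective (μ : Measure Ω) (X : Ω → E) {φ : E → F} (hφ : φ.Injective) (e : E) :
    mass μ (fun ω => φ (X ω)) (φ e) = mass μ X e := by
  simp only [mass, Set.preimage, Set.mem_singleton_iff, hφ.eq_iff]

lemma mass_eq_zero_of_notMem_range (μ : Measure Ω) {X : Ω → E} {e : E} (he : e ∉ Set.range X) :
    mass μ X e = 0 := by
  simp [mass, Set.preimage_singleton_eq_empty.2 he]

variable [MeasurableSpace E] [MeasurableSingletonClass E]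

lemma mass_prodMk_of_indepFun [MeasurableSpace F] [MeasurableSingletonClass F]
    {μ : Measure Ω} {X : Ω → E} {Y : Ω → F} (h : IndepFun X Y μ) (e : E) (y : F) :
    mass μ (fun ω => (X ω, Y ω)) (e, y) = mass μ X e * mass μ Y y := by
  have hXY := h.measure_inter_preimage_eq_mul _ _ (measurableSet_singleton e)
    (measurableSet_singleton y)
  rw [← Set.mk_preimage_prod, Set.singleton_prod_singleton] at hXY
  simp only [mass, measureReal_def, hXY, ENNReal.toReal_mul]

variable [Fintype E]

lemma sum_filter_mass (μ : Measure Ω) [IsFiniteMeasure μ] {X : Ω → E} (hX : Measurable X)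
    (p : E → Prop) [DecidablePred p] : ∑ e with p e, mass μ X e = μ.real {ω | p (X ω)} := by
  simp only [mass]
  rw [sum_measureReal_preimage_singleton _ fun e _ => hX (measurableSet_singleton e)]
  simp [Set.preimage]

lemma sum_mass (μ : Measure Ω) [IsFiniteMeasure μ] {X : Ω → E} (hX : Measurable X) :
    ∑ e, mass μ X e = μ.real Set.univ := by
  simpa using sum_filter_mass μ hX fun _ => True

lemma sum_mass_prodMk_left (μ : Measure Ω) [IsFiniteMeasure μ] {X : Ω → E} (hX : Measurable X)
    (Y : Ω → F) (y : F) : ∑ e, mass μ (fun ω => (X ω, Y ω)) (e, y) = mass μ Y y := by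
  have hXe (e : E) : MeasurableSet (X ⁻¹' {e}) := hX (measurableSet_singleton e)
  have h := sum_mass (μ.restrict (Y ⁻¹' {y})) hX
  simp only [mass, measureReal_restrict_apply (hXe _), measureReal_restrict_apply_univ,
    ← Set.mk_preimage_prod, Set.singleton_prod_singleton] at h
  exact h

end Mass

section Entropy

variable {Ω E F G : Type*} [MeasurableSpace Ω] [Fintype E] [Fintype F] [Fintype G]

lemma entH_eq_sum_mass (μ : Measure Ω) (X : Ω → E) :
    entH μ X = ∑ e, Real.negMulLog (mass μ X e) :=
  rfl

lemma entH_comp_of_injective (μ : Measure Ω) (X : Ω → E) {φ : E → F} (hφ : φ.Injective) :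
    entH μ (fun ω => φ (X ω)) = entH μ X := by
  refine (Fintype.sum_of_injective φ hφ _ _ (fun f hf => ?_) fun e => ?_).symm
  · have hf' : f ∉ Set.range fun ω => φ (X ω) := fun ⟨ω, hω⟩ => hf ⟨X ω, hω⟩
    exact (congrArg _ (mass_eq_zero_of_notMem_range μ hf')).trans Real.negMulLog_zero
  · exact congrArg _ (mass_comp_of_injective μ X hφ e).symm

lemma entH_const (μ : Measure Ω) [IsProbabilityMeasure μ] (e : E) : entH μ (fun _ => e) = 0 := by
  rw [entH_comp_of_injective μ (fun _ => ()) (φ := fun _ => e)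
    (Function.injective_of_subsingleton _)]
  simp [entH]

variable [MeasurableSpace E] [MeasurableSingletonClass E]

/-- Summing over the values of `X` itself puts the entropies of all functions of `X` under a single
sum, where they can be compared term by term. -/
lemma entH_comp_eq_neg_sum (μ : Measure Ω) [IsFiniteMeasure μ] {X : Ω → E} (hX : Measurable X)
    (φ : E → F) :
    entH μ (fun ω => φ (X ω)) =
      -∑ e, mass μ X e * Real.log (mass μ (fun ω => φ (X ω)) (φ e)) := by
  classical
  rw [entH_eq_sum_mass, ← Finset.sum_fiberwise _ φ, ← Finset.sum_neg_distrib]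
  refine Finset.sum_congr rfl fun f _ => ?_
  have hf : ∑ e with φ e = f, mass μ X e = mass μ (fun ω => φ (X ω)) f :=
    sum_filter_mass μ hX fun e => φ e = f
  calc Real.negMulLog (mass μ (fun ω => φ (X ω)) f)
    _ = -∑ e with φ e = f, mass μ X e * Real.log (mass μ (fun ω => φ (X ω)) f) := by
      rw [← Finset.sum_mul, hf, Real.negMulLog, neg_mul]
    _ = -∑ e with φ e = f, mass μ X e * Real.log (mass μ (fun ω => φ (X ω)) (φ e)) := by
      congr 1
      exact Finset.sum_congr rfl fun e he => by rw [(Finset.mem_filter.1 he).2]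

variable [MeasurableSpace F] [MeasurableSingletonClass F]

lemma mutInf_eq_zero_of_indepFun {μ : Measure Ω} [IsProbabilityMeasure μ] {X : Ω → E} {Y : Ω → F}
    (hX : Measurable X) (hY : Measurable Y) (h : IndepFun X Y μ) : mutInf μ X Y = 0 := by
  have hXY : entH μ (fun ω => (X ω, Y ω)) = entH μ X + entH μ Y := by
    simp only [entH_eq_sum_mass, Fintype.sum_prod_type, mass_prodMk_of_indepFun h,
      Real.negMulLog_mul, Finset.sum_add_distrib, ← Finset.sum_mul, ← Finset.mul_sum,
      sum_mass μ hX, sum_mass μ hY, probReal_univ, one_mul]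
  rw [mutInf, hXY, sub_self]

end Entropy

section ConditionalMutualInformation

lemma sub_div_le_mul_log {p a b c : ℝ} (hp : 0 ≤ p) (ha : p ≤ a) (hb : p ≤ b) (hc : p ≤ c) :
    p - a * b / c ≤ p * (Real.log p + Real.log c - Real.log a - Real.log b) := by
  rcases hp.eq_or_lt with rfl | hp
  · simpa using div_nonneg (mul_nonneg ha hb) hc
  have ha₀ := hp.trans_le ha
  have hb₀ := hp.trans_le hb
  have hc₀ := hp.trans_le hc
  have hlog : Real.log p + Real.log c - Real.log a - Real.log b
      = -Real.log (a * b / (p * c)) := by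
    rw [Real.log_div (by positivity) (by positivity), Real.log_mul ha₀.ne' hb₀.ne',
      Real.log_mul hp.ne' hc₀.ne']
    ring
  calc p - a * b / c = p * -(a * b / (p * c) - 1) := by field_simp; ring
    _ ≤ p * -Real.log (a * b / (p * c)) := by
        gcongr
        exact Real.log_le_sub_one_of_pos (by positivity)
    _ = p * (Real.log p + Real.log c - Real.log a - Real.log b) := by rw [hlog]

variable {Ω E F G : Type*} [MeasurableSpace Ω] [Fintype E] [Fintype F] [Fintype G]
  [MeasurableSpace E] [MeasurableSingletonClass E] [MeasurableSpace F] [MeasurableSingletonClass F]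
  {X : Ω → E} {Y : Ω → F} {Z : Ω → G}

section Measurable

variable [MeasurableSpace G] [MeasurableSingletonClass G]

lemma condMutInf_eq_sum (μ : Measure Ω) [IsFiniteMeasure μ]
    (hX : Measurable X) (hY : Measurable Y) (hZ : Measurable Z) :
    condMutInf μ X Y Z = ∑ p : E × F × G, mass μ (fun ω => (X ω, Y ω, Z ω)) p *
      (Real.log (mass μ (fun ω => (X ω, Y ω, Z ω)) p) + Real.log (mass μ Z p.2.2)
        - Real.log (mass μ (fun ω => (X ω, Z ω)) (p.1, p.2.2))
        - Real.log (mass μ (fun ω => (Y ω, Z ω)) p.2)) := by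
  have hXYZ := hX.prodMk (hY.prodMk hZ)
  rw [condMutInf, entH_comp_eq_neg_sum μ hXYZ fun p => (p.1, p.2.2),
    entH_comp_eq_neg_sum μ hXYZ fun p => p.2, entH_comp_eq_neg_sum μ hXYZ fun p => p,
    entH_comp_eq_neg_sum μ hXYZ fun p => p.2.2]
  simp only [mul_sub, mul_add, Finset.sum_sub_distrib, Finset.sum_add_distrib]
  ring

lemma sum_mass_mul_mass_div_mass (μ : Measure Ω) [IsFiniteMeasure μ]
    (hX : Measurable X) (hY : Measurable Y) (hZ : Measurable Z) :
    ∑ p : E × F × G, mass μ (fun ω => (X ω, Z ω)) (p.1, p.2.2) * mass μ (fun ω => (Y ω, Z ω)) p.2 /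
      mass μ Z p.2.2 = μ.real Set.univ := by
  -- Where `P(Z = z) = 0`, the convention `0 / 0 = 0` still gives `P(Z = z)² / P(Z = z) = P(Z = z)`.
  simp only [Fintype.sum_prod_type_right, ← Finset.sum_div, ← Finset.mul_sum, ← Finset.sum_mul,
    sum_mass_prodMk_left μ hX, sum_mass_prodMk_left μ hY, mul_self_div_self, sum_mass μ hZ]

theorem condMutInf_nonneg (μ : Measure Ω) [IsFiniteMeasure μ]
    (hX : Measurable X) (hY : Measurable Y) (hZ : Measurable Z) : 0 ≤ condMutInf μ X Y Z := by
  calc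
    0 = ∑ p : E × F × G, (mass μ (fun ω => (X ω, Y ω, Z ω)) p -
        mass μ (fun ω => (X ω, Z ω)) (p.1, p.2.2) * mass μ (fun ω => (Y ω, Z ω)) p.2 /
          mass μ Z p.2.2) := by
      rw [Finset.sum_sub_distrib, sum_mass μ (hX.prodMk (hY.prodMk hZ)),
        sum_mass_mul_mass_div_mass μ hX hY hZ, sub_self]
    _ ≤ condMutInf μ X Y Z := by
      rw [condMutInf_eq_sum μ hX hY hZ]
      gcongr with p
      exact sub_div_le_mul_log (mass_nonneg ..)
        (mass_le_mass_comp μ _ (fun p : E × F × G => (p.1, p.2.2)) p)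
        (mass_le_mass_comp μ _ (fun p : E × F × G => p.2) p)
        (mass_le_mass_comp μ _ (fun p : E × F × G => p.2.2) p)

end Measurable

theorem mutInf_nonneg (μ : Measure Ω) [IsProbabilityMeasure μ]
    (hX : Measurable X) (hY : Measurable Y) : 0 ≤ mutInf μ X Y := by
  have h := condMutInf_nonneg μ hX hY (measurable_const (a := ()))
  rw [condMutInf, entH_const,
    entH_comp_of_injective μ X (φ := fun x => (x, ())) (Prod.mk_left_injective ()),
    entH_comp_of_injective μ Y (φ := fun y => (y, ())) (Prod.mk_left_injective ()),
    entH_comp_of_injective μ (fun ω => (X ω, Y ω)) (φ := fun p => (p.1, p.2, ()))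
      fun p q => by simp [Prod.ext_iff], sub_zero] at h
  exact h

theorem condEnt_nonneg (μ : Measure Ω) [IsFiniteMeasure μ]
    (hX : Measurable X) (hY : Measurable Y) : 0 ≤ condEnt μ X Y := by
  have h := condMutInf_nonneg μ hX hX hY
  rw [condMutInf, entH_comp_of_injective μ (fun ω => (X ω, Y ω)) (φ := fun p => (p.1, p.1, p.2))
    fun p q => by simp +contextual [Prod.ext_iff]] at h
  rw [condEnt]
  linarith

theorem mutInf_comp_le (μ : Measure Ω) [IsFiniteMeasure μ]
    (hX : Measurable X) (hY : Measurable Y) (φ : F → G) :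
    mutInf μ X (fun ω => φ (Y ω)) ≤ mutInf μ X Y := by
  let : MeasurableSpace G := ⊤
  have hφY : Measurable fun ω => φ (Y ω) := (measurable_of_finite φ).comp hY
  have h := condMutInf_nonneg μ hX hY hφY
  rw [condMutInf,
    entH_comp_of_injective μ Y (φ := fun y => (y, φ y)) fun y y' => by simp +contextual,
    entH_comp_of_injective μ (fun ω => (X ω, Y ω)) (φ := fun p => (p.1, p.2, φ p.2))
      fun p q => by simp +contextual [Prod.ext_iff]] at h
  rw [mutInf, mutInf]
  linarith

variable [MeasurableSpace G] [MeasurableSingletonClass G]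

theorem mutInf_add_mutInf_le (μ : Measure Ω) [IsFiniteMeasure μ]
    (hX : Measurable X) (hY : Measurable Y) (hZ : Measurable Z) :
    mutInf μ X Z + mutInf μ Y Z ≤ mutInf μ (fun ω => (X ω, Y ω)) Z + mutInf μ X Y := by
  have h := condMutInf_nonneg μ hX hY hZ
  have hassoc : entH μ (fun ω => ((X ω, Y ω), Z ω)) = entH μ (fun ω => (X ω, Y ω, Z ω)) :=
    (entH_comp_of_injective μ _ (Equiv.prodAssoc E F G).injective).symm
  simp only [condMutInf, mutInf, hassoc] at h ⊢
  linarith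

theorem mutInf_prodMk_le_entH_add_mutInf (μ : Measure Ω) [IsProbabilityMeasure μ]
    (hX : Measurable X) (hY : Measurable Y) (hZ : Measurable Z) :
    mutInf μ X (fun ω => (Y ω, Z ω)) ≤ entH μ Y + mutInf μ X Z := by
  have hYZ := mutInf_nonneg μ hY hZ
  have hYXZ := condEnt_nonneg μ hY (hX.prodMk hZ)
  have hcomm : entH μ (fun ω => (Y ω, X ω, Z ω)) = entH μ (fun ω => (X ω, Y ω, Z ω)) :=
    entH_comp_of_injective μ (fun ω => (X ω, Y ω, Z ω)) (φ := fun p => (p.2.1, p.1, p.2.2))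
      fun p q => by simp +contextual [Prod.ext_iff]
  simp only [mutInf, condEnt, hcomm] at hYZ hYXZ ⊢
  linarith

end ConditionalMutualInformation

theorem information_causality_no_input_independence_general {Ω E1 E2 EA EZ F1 F2 : Type*}
    [MeasurableSpace Ω]
    [Fintype E1] [Fintype E2] [Finite EA] [Fintype EZ] [Fintype F1] [Fintype F2]
    [MeasurableSpace E1] [MeasurableSingletonClass E1]
    [MeasurableSpace E2] [MeasurableSingletonClass E2]
    [MeasurableSpace EA] [MeasurableSingletonClass EA]
    [MeasurableSpace EZ] [MeasurableSingletonClass EZ]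
    (μ : Measure Ω) [IsProbabilityMeasure μ]
    {X1 : Ω → E1} {X2 : Ω → E2} {A : Ω → EA} {Z : Ω → EZ}
    (hX1 : Measurable X1) (hX2 : Measurable X2) (hA : Measurable A) (hZ : Measurable Z)
    (hindep : IndepFun A (fun ω => (X1 ω, X2 ω)) μ) (g1 : EZ → EA → F1) (g2 : EZ → EA → F2) :
    mutInf μ X1 (fun ω => g1 (Z ω) (A ω)) + mutInf μ X2 (fun ω => g2 (Z ω) (A ω)) ≤
      entH μ Z + mutInf μ X1 X2 := by
  have := Fintype.ofFinite EA
  have hX := hX1.prodMk hX2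
  have hW := hZ.prodMk hA
  calc
    _ ≤ mutInf μ X1 (fun ω => (Z ω, A ω)) + mutInf μ X2 (fun ω => (Z ω, A ω)) :=
      add_le_add (mutInf_comp_le μ hX1 hW fun p => g1 p.1 p.2)
        (mutInf_comp_le μ hX2 hW fun p => g2 p.1 p.2)
    _ ≤ mutInf μ (fun ω => (X1 ω, X2 ω)) (fun ω => (Z ω, A ω)) + mutInf μ X1 X2 :=
      mutInf_add_mutInf_le μ hX1 hX2 hW
    _ ≤ entH μ Z + mutInf μ (fun ω => (X1 ω, X2 ω)) A + mutInf μ X1 X2 := by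
      gcongr
      exact mutInf_prodMk_le_entH_add_mutInf μ hX hZ hA
    _ = entH μ Z + mutInf μ X1 X2 := by
      rw [mutInf_eq_zero_of_indepFun hX hA hindep.symm, add_zero]

/-- **Information causality inequality without input independence**: if `A` is
independent of the pair `(X1, X2)`, `Z = f (X1, X2, A)`, `Y1 = g1 (Z, A)` and
`Y2 = g2 (Z, A)`, then `I(X1:Y1) + I(X2:Y2) ≤ H(Z) + I(X1:X2)`. -/
theorem information_causality_no_input_independence {Ω E1 E2 EA EZ F1 F2 : Type*}
    [MeasurableSpace Ω]
    [Fintype E1] [Fintype E2] [Fintype EA] [Fintype EZ] [Fintype F1] [Fintype F2]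
    [MeasurableSpace E1] [MeasurableSingletonClass E1]
    [MeasurableSpace E2] [MeasurableSingletonClass E2]
    [MeasurableSpace EA] [MeasurableSingletonClass EA]
    (μ : Measure Ω) [IsProbabilityMeasure μ]
    (X1 : Ω → E1) (X2 : Ω → E2) (A : Ω → EA)
    (hX1 : Measurable X1) (hX2 : Measurable X2) (hA : Measurable A)
    (hindep : IndepFun A (fun ω => (X1 ω, X2 ω)) μ)
    (f : E1 → E2 → EA → EZ) (g1 : EZ → EA → F1) (g2 : EZ → EA → F2)
    (Z : Ω → EZ) (Y1 : Ω → F1) (Y2 : Ω → F2)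
    (hZ : ∀ ω, Z ω = f (X1 ω) (X2 ω) (A ω))
    (hY1 : ∀ ω, Y1 ω = g1 (Z ω) (A ω)) (hY2 : ∀ ω, Y2 ω = g2 (Z ω) (A ω)) :
    mutInf μ X1 Y1 + mutInf μ X2 Y2 ≤ entH μ Z + mutInf μ X1 X2 := by
  let : MeasurableSpace EZ := ⊤
  have hZm : Measurable Z := funext hZ ▸
    (measurable_of_finite fun p : E1 × E2 × EA => f p.1 p.2.1 p.2.2).comp
      (hX1.prodMk (hX2.prodMk hA))
  rw [funext hY1, funext hY2]
  exact information_causality_no_input_independence_general μ hX1 hX2 hA hZm hindep g1 g2
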